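/- Let X be a real Banach space and let M : Σ → b(X) be a set-valued map defined on a σ-algebra Σ. Suppose there is a linear subspace Y ⊆ X* having the Orlicz-Thomas property such that: (i) M(A) is convex and σ(X,Y)-compact for every A ∈ Σ; and (ii) the support map s(x*,M) is countably additive for every x* ∈ Y. Then M is a strong multimeasure. -/

import Mathlib

/-!
For a disjoint sequence `A` the identity `M (⋃ n, A n) = ∑ₙ M (A n)` holds even without closures.
Both inclusions come from Hahn–Banach: a linear functional on `Y` dominated by the support function
of a convex `σ(X, Y)`-compact set `K` is the evaluation at a point of `K`.

Given a selection `x n ∈ M (A n)`, the scalar series `∑ₙ f (x n)` converges absolutely for `f ∈ Y`,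
being squeezed between `-∑ₙ s(-f, M (A n))` and `∑ₙ s(f, M (A n))`. For `S ⊆ ℕ` the functional
`f ↦ ∑_{n ∈ S} f (x n)` is dominated by `s(f, M (⋃_{n ∈ S} A n))`, so it is the evaluation at some
`v S ∈ M (⋃_{n ∈ S} A n)`. The vector-valued set function `v` is countably additive against `Y`,
hence countably additive by the Orlicz–Thomas property, and `v {n} = x n`; therefore `∑ₙ x n`
converges unconditionally to `v ℕ ∈ M (⋃ n, A n)`.

Conversely, `∑ₙ M (A n)` is convex, it is `σ(X, Y)`-compact as a continuous image of `∏ₙ M (A n)`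
(Weierstrass M-test), and its support function on `Y` is `∑ₙ s(f, M (A n)) = s(f, M (⋃ n, A n))`,
so it contains `M (⋃ n, A n)`.
-/

/-- The series of sets `∑ₙ Cₙ` is unconditionally convergent: every selection is
(unconditionally) summable. -/
def UncondConvSeriesOfSets {X : Type*} [NormedAddCommGroup X] (C : ℕ → Set X) : Prop :=
  ∀ x : ℕ → X, (∀ n, x n ∈ C n) → Summable x

/-- The sum of the series of sets `∑ₙ Cₙ`: the set of all sums of selections. -/
def seriesSumSet {X : Type*} [NormedAddCommGroup X] (C : ℕ → Set X) : Set X :=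
  {s | ∃ x : ℕ → X, (∀ n, x n ∈ C n) ∧ HasSum x s}

/-- The topology `σ(X, Y)` of pointwise convergence on a set `Y ⊆ X*`. -/
def sigmaTop {X : Type*} [NormedAddCommGroup X] [NormedSpace ℝ X]
    (Y : Set (X →L[ℝ] ℝ)) : TopologicalSpace X :=
  TopologicalSpace.induced (fun x => fun y : Y => (y : X →L[ℝ] ℝ) x) Pi.topologicalSpace

/-- The support functional `s(x*, C) = sup x*(C)`. -/
noncomputable def supportFn {X : Type*} [NormedAddCommGroup X] [NormedSpace ℝ X]
    (f : X →L[ℝ] ℝ) (C : Set X) : ℝ := sSup (f '' C)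

/-- A set function on a σ-algebra, with values in a topological abelian monoid, is
countably additive: on every disjoint sequence of measurable sets the series of values
converges (unconditionally) to the value of the union. -/
def CountablyAdditive {Ω E : Type*} [MeasurableSpace Ω] [AddCommMonoid E]
    [TopologicalSpace E] (ν : Set Ω → E) : Prop :=
  ∀ A : ℕ → Set Ω, (∀ n, MeasurableSet (A n)) → Pairwise (Function.onFun Disjoint A) →
    HasSum (fun n => ν (A n)) (ν (⋃ n, A n))

/-- A set `W ⊆ X*` has the Orlicz–Thomas property: for every σ-algebra `Σ` and every map
`ν : Σ → X`, if `x* ∘ ν` is countably additive for all `x* ∈ W` then `ν` is countably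
additive. -/
def HasOrliczThomas {X : Type*} [NormedAddCommGroup X] [NormedSpace ℝ X]
    (W : Set (X →L[ℝ] ℝ)) : Prop :=
  ∀ (Ω : Type) (_ : MeasurableSpace Ω) (ν : Set Ω → X),
    (∀ f ∈ W, CountablyAdditive (fun A => f (ν A))) → CountablyAdditive ν

/-- `M` is a strong multimeasure: for every disjoint sequence of measurable sets the
series `∑ₙ M(Aₙ)` is unconditionally convergent and the norm closure of `M(⋃ₙ Aₙ)`
equals the norm closure of `∑ₙ M(Aₙ)`. -/
def IsStrongMultimeasure {Ω X : Type*} [MeasurableSpace Ω] [NormedAddCommGroup X]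
    (M : Set Ω → Set X) : Prop :=
  ∀ A : ℕ → Set Ω, (∀ n, MeasurableSet (A n)) → Pairwise (Function.onFun Disjoint A) →
    UncondConvSeriesOfSets (fun n => M (A n)) ∧
    closure (M (⋃ n, A n)) = closure (seriesSumSet fun n => M (A n))

open Set Function

section WeakDuality

/-- Hahn–Banach separates `φ` from the compact convex set `B '' K` in the algebraic dual of `F`,
where the continuous functionals for pointwise convergence are the evaluations at points of `F`. -/
theorem exists_mem_eq_of_forall_exists_le {E F : Type*} [AddCommMonoid E] [Module ℝ E]
    [AddCommGroup F] [Module ℝ F] (B : E →ₗ[ℝ] F →ₗ[ℝ] ℝ) {K : Set E}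
    (hconv : Convex ℝ K) (hcpt : IsCompact ((fun x y => B x y) '' K)) {φ : F →ₗ[ℝ] ℝ}
    (hφ : ∀ y, ∃ k ∈ K, φ y ≤ B k y) : ∃ k ∈ K, B k = φ := by
  let ev : (F →ₗ[ℝ] ℝ) →ₗ[ℝ] F →ₗ[ℝ] ℝ := LinearMap.id
  have hemb : Topology.IsEmbedding fun (g : WeakBilin ev) y => ev g y :=
    WeakBilin.isEmbedding injective_id
  have : T2Space (WeakBilin ev) := hemb.t2Space
  have hBK : IsCompact (X := WeakBilin ev) (B '' K) :=
    hemb.isInducing.isCompact_iff.2 <|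
      (image_image (fun (g : F →ₗ[ℝ] ℝ) y => g y) B K).symm ▸ hcpt
  by_contra hnot
  obtain ⟨f, u, hK, hu⟩ := geometric_hahn_banach_closed_point (E := WeakBilin ev)
    (hconv.linear_image B) hBK.isClosed hnot
  obtain ⟨y, rfl⟩ := LinearMap.dualEmbedding_surjective ev f
  obtain ⟨k, hk, hle⟩ := hφ y
  exact (hle.trans_lt (hK _ (mem_image_of_mem B hk))).not_gt hu

variable {X : Type*} [NormedAddCommGroup X] [NormedSpace ℝ X]

theorem continuous_sigmaTop {W : Set (X →L[ℝ] ℝ)} {f : X →L[ℝ] ℝ} (hf : f ∈ W) :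
    @Continuous X ℝ (sigmaTop W) _ f :=
  @Continuous.comp X (W → ℝ) ℝ (sigmaTop W) _ _ _ _ (continuous_apply (⟨f, hf⟩ : W))
    continuous_induced_dom

theorem isCompact_image_of_isCompact_sigmaTop {W : Set (X →L[ℝ] ℝ)} {K : Set X}
    (hK : @IsCompact X (sigmaTop W) K) {f : X →L[ℝ] ℝ} (hf : f ∈ W) : IsCompact (f '' K) :=
  @IsCompact.image X ℝ (sigmaTop W) _ K f hK (continuous_sigmaTop hf)

theorem isCompact_sigmaTop_iff {W : Set (X →L[ℝ] ℝ)} {K : Set X} :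
    @IsCompact X (sigmaTop W) K ↔ IsCompact ((fun x (f : W) => (f : X →L[ℝ] ℝ) x) '' K) := by
  let _ : TopologicalSpace X := sigmaTop W
  exact Topology.IsInducing.isCompact_iff ⟨rfl⟩

theorem le_supportFn {f : X →L[ℝ] ℝ} {K : Set X} (hf : IsCompact (f '' K)) {x : X} (hx : x ∈ K) :
    f x ≤ supportFn f K :=
  le_csSup hf.bddAbove (mem_image_of_mem f hx)

theorem exists_apply_eq_supportFn {f : X →L[ℝ] ℝ} {K : Set X} (hne : K.Nonempty)
    (hf : IsCompact (f '' K)) : ∃ k ∈ K, f k = supportFn f K :=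
  hf.sSup_mem (hne.image f)

variable {Y : Submodule ℝ (X →L[ℝ] ℝ)} {K : Set X}

theorem abs_apply_le_abs_supportFn_add (hK : @IsCompact X (sigmaTop (Y : Set (X →L[ℝ] ℝ))) K)
    {f : X →L[ℝ] ℝ} (hf : f ∈ Y) {x : X} (hx : x ∈ K) :
    |f x| ≤ |supportFn f K| + |supportFn (-f) K| := by
  have upper : f x ≤ supportFn f K :=
    le_supportFn (isCompact_image_of_isCompact_sigmaTop hK hf) hx
  have lower : -f x ≤ supportFn (-f) K :=
    le_supportFn (isCompact_image_of_isCompact_sigmaTop hK (Y.neg_mem hf)) hx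
  exact abs_le'.2
    ⟨(upper.trans (le_abs_self _)).trans (le_add_of_nonneg_right (abs_nonneg _)),
      (lower.trans (le_abs_self _)).trans (le_add_of_nonneg_left (abs_nonneg _))⟩

/-- The pairing `⟨x, f⟩ = f x` of `X` with a subspace `Y` of its dual; it maps the points
of `X` to linear functionals on `Y`, and `σ(X, Y)` is pointwise convergence of the images. -/
def evalPairing (Y : Submodule ℝ (X →L[ℝ] ℝ)) : X →ₗ[ℝ] Y →ₗ[ℝ] ℝ :=
  ((topDualPairing ℝ X).domRestrict Y).flip

theorem exists_mem_forall_apply_eq (hne : K.Nonempty) (hconv : Convex ℝ K)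
    (hK : @IsCompact X (sigmaTop (Y : Set (X →L[ℝ] ℝ))) K) {φ : Y →ₗ[ℝ] ℝ}
    (hφ : ∀ f : Y, φ f ≤ supportFn f K) : ∃ k ∈ K, ∀ f : Y, φ f = (f : X →L[ℝ] ℝ) k := by
  have hφK (f : Y) : ∃ k ∈ K, φ f ≤ evalPairing Y k f := by
    obtain ⟨k, hk, hkf⟩ :=
      exists_apply_eq_supportFn hne (isCompact_image_of_isCompact_sigmaTop hK f.2)
    exact ⟨k, hk, (hφ f).trans_eq hkf.symm⟩
  obtain ⟨k, hk, rfl⟩ := exists_mem_eq_of_forall_exists_le (F := Y) (evalPairing Y) hconv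
    (isCompact_sigmaTop_iff.1 hK) hφK
  exact ⟨k, hk, fun _ => rfl⟩

theorem mem_of_forall_le_supportFn (hY : ∀ a b : X, (∀ f ∈ Y, f a = f b) → a = b)
    (hne : K.Nonempty) (hconv : Convex ℝ K)
    (hK : @IsCompact X (sigmaTop (Y : Set (X →L[ℝ] ℝ))) K) {a : X}
    (ha : ∀ f ∈ Y, f a ≤ supportFn f K) : a ∈ K := by
  obtain ⟨k, hk, hak⟩ :=
    exists_mem_forall_apply_eq hne hconv hK (φ := evalPairing Y a) fun f => ha f f.2
  rwa [hY a k fun f hf => hak ⟨f, hf⟩]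

theorem summable_apply_of_summable_supportFn {ι : Type*} {C : ι → Set X}
    (hC : ∀ i, @IsCompact X (sigmaTop (Y : Set (X →L[ℝ] ℝ))) (C i))
    (hs : ∀ f ∈ Y, Summable fun i => supportFn f (C i)) {x : ι → X} (hx : ∀ i, x i ∈ C i)
    {f : X →L[ℝ] ℝ} (hf : f ∈ Y) : Summable fun i => f (x i) :=
  ((hs f hf).abs.add (hs (-f) (Y.neg_mem hf)).abs).of_norm_bounded fun i =>
    abs_apply_le_abs_supportFn_add (hC i) hf (hx i)

theorem exists_mem_forall_hasSum_apply {ι : Type*} {C : ι → Set X} {K : Set X}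
    (hC : ∀ i, @IsCompact X (sigmaTop (Y : Set (X →L[ℝ] ℝ))) (C i)) (hne : K.Nonempty)
    (hconv : Convex ℝ K) (hK : @IsCompact X (sigmaTop (Y : Set (X →L[ℝ] ℝ))) K)
    (hs : ∀ f ∈ Y, HasSum (fun i => supportFn f (C i)) (supportFn f K)) {x : ι → X}
    (hx : ∀ i, x i ∈ C i) : ∃ k ∈ K, ∀ f ∈ Y, HasSum (fun i => f (x i)) (f k) := by
  have hsum (f : Y) : Summable fun i => (f : X →L[ℝ] ℝ) (x i) :=
    summable_apply_of_summable_supportFn hC (fun f hf => (hs f hf).summable) hx f.2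
  let φ : Y →ₗ[ℝ] ℝ :=
    { toFun f := ∑' i, (f : X →L[ℝ] ℝ) (x i)
      map_add' f g := (hsum f).tsum_add (hsum g)
      map_smul' c f := tsum_mul_left }
  obtain ⟨k, hk, hφk⟩ := exists_mem_forall_apply_eq hne hconv hK (φ := φ) fun f =>
    hasSum_le (fun i => le_supportFn (isCompact_image_of_isCompact_sigmaTop (hC i) f.2) (hx i))
      (hsum f).hasSum (hs f f.2)
  exact ⟨k, hk, fun f hf => hφk ⟨f, hf⟩ ▸ (hsum ⟨f, hf⟩).hasSum⟩

end WeakDuality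

section CountableAdditivity

theorem CountablyAdditive.map_empty {Ω E : Type*} [MeasurableSpace Ω] [AddCommGroup E]
    [TopologicalSpace E] [IsTopologicalAddGroup E] [T2Space E] {ν : Set Ω → E}
    (hν : CountablyAdditive ν) : ν ∅ = 0 :=
  (summable_const_iff _).1
    (hν (fun _ => ∅) (fun _ => .empty) fun _ _ _ => disjoint_empty _).summable

theorem CountablyAdditive.hasSum_iUnion {Ω E ι : Type*} [MeasurableSpace Ω] [AddCommGroup E]
    [TopologicalSpace E] [IsTopologicalAddGroup E] [T2Space E] [Countable ι] {ν : Set Ω → E}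
    (hν : CountablyAdditive ν) {A : ι → Set Ω} (hA : ∀ i, MeasurableSet (A i))
    (hd : Pairwise (Disjoint on A)) : HasSum (fun i => ν (A i)) (ν (⋃ i, A i)) := by
  obtain ⟨e, he⟩ := Countable.exists_injective_nat ι
  rw [← hasSum_extend_zero he]
  convert hν (extend e A fun _ => ∅) ?_ ?_
  · simp only [Pi.zero_def, apply_extend ν, comp_def, hν.map_empty]
  · exact (iSup_extend_bot he _).symm
  · simp [apply_extend MeasurableSet, comp_def, hA]
  · exact hd.disjoint_extend_bot (he.factorsThrough _)

variable {X : Type*} [NormedAddCommGroup X] [NormedSpace ℝ X] {W : Set (X →L[ℝ] ℝ)}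

/-- If `W` does not distinguish `a` from `b`, the constant set function `a - b` is countably
additive against `W`. -/
theorem HasOrliczThomas.eq_of_forall_apply_eq (hW : HasOrliczThomas W) {a b : X}
    (hab : ∀ f ∈ W, f a = f b) : a = b := by
  have hconst : CountablyAdditive fun _ : Set ℕ => a - b :=
    hW ℕ ⊤ _ fun f hf _ _ _ => by
      simp only [map_sub, hab f hf, sub_self]
      exact hasSum_zero
  exact sub_eq_zero.1 hconst.map_empty

/-- The Orlicz–Pettis theorem for series; `v S` is the sum against `W` of the subseries over `S`. -/
theorem HasOrliczThomas.hasSum (hW : HasOrliczThomas W) {x : ℕ → X} {v : Set ℕ → X}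
    (hv : ∀ S : Set ℕ, ∀ f ∈ W, HasSum (fun n : S => f (x n)) (f (v S))) : HasSum x (v univ) := by
  have hvca : CountablyAdditive v := hW ℕ ⊤ v fun f hf S _ hS =>
    HasSum.sigma ((unionEqSigmaOfDisjoint hS).symm.hasSum_iff.2 (hv (⋃ k, S k) f hf))
      fun k => hv (S k) f hf
  have hsingleton (n : ℕ) : v {n} = x n := hW.eq_of_forall_apply_eq fun f hf =>
    (hv {n} f hf).unique (hasSum_unique _)
  simpa only [hsingleton, iUnion_of_singleton] using
    hvca (fun n => {n}) (fun _ => trivial) fun _ _ hmn => disjoint_singleton.2 hmn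

end CountableAdditivity

section SeriesOfSets

variable {X : Type*} [NormedAddCommGroup X] {C : ℕ → Set X}

namespace UncondConvSeriesOfSets

theorem seriesSumSet_eq_image_tsum (hC : UncondConvSeriesOfSets C) :
    seriesSumSet C = (fun x => ∑' n, x n) '' univ.pi C := by
  ext s
  constructor
  · rintro ⟨x, hx, hxs⟩
    exact ⟨x, fun n _ => hx n, hxs.tsum_eq⟩
  · rintro ⟨x, hx, rfl⟩
    have hx' (n : ℕ) : x n ∈ C n := hx n (mem_univ n)
    exact ⟨x, hx', (hC x hx').hasSum⟩

theorem nonempty_seriesSumSet (hC : UncondConvSeriesOfSets C)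
    (hne : ∀ n, (C n).Nonempty) : (seriesSumSet C).Nonempty := by
  rw [hC.seriesSumSet_eq_image_tsum]
  exact (univ_pi_nonempty_iff.2 hne).image _

variable [NormedSpace ℝ X]

theorem hasSum_supportFn_seriesSumSet (hC : UncondConvSeriesOfSets C)
    (hne : ∀ n, (C n).Nonempty) {f : X →L[ℝ] ℝ} (hf : ∀ n, IsCompact (f '' C n)) :
    HasSum (fun n => supportFn f (C n)) (supportFn f (seriesSumSet C)) := by
  choose x hx hxf using fun n => exists_apply_eq_supportFn (hne n) (hf n)
  have hsum : HasSum (fun n => supportFn f (C n)) (f (∑' n, x n)) := by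
    simpa only [hxf] using (hC x hx).hasSum.mapL f
  have hgreatest : IsGreatest (f '' seriesSumSet C) (f (∑' n, x n)) := by
    refine ⟨mem_image_of_mem f ⟨x, hx, (hC x hx).hasSum⟩, ?_⟩
    rintro _ ⟨s, ⟨z, hz, hzs⟩, rfl⟩
    exact hasSum_le (fun n => le_supportFn (hf n) (hz n)) (hzs.mapL f) hsum
  rwa [supportFn, hgreatest.csSup_eq]

theorem isCompact_sigmaTop_seriesSumSet {Y : Submodule ℝ (X →L[ℝ] ℝ)}
    (hC : UncondConvSeriesOfSets C)
    (hcpt : ∀ n, @IsCompact X (sigmaTop (Y : Set (X →L[ℝ] ℝ))) (C n))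
    (hs : ∀ f ∈ Y, Summable fun n => supportFn f (C n)) :
    @IsCompact X (sigmaTop (Y : Set (X →L[ℝ] ℝ))) (seriesSumSet C) := by
  have himage : (fun s (f : Y) => (f : X →L[ℝ] ℝ) s) '' seriesSumSet C =
      (fun x (f : Y) => ∑' n, (f : X →L[ℝ] ℝ) (x n)) '' univ.pi C := by
    rw [hC.seriesSumSet_eq_image_tsum, image_image]
    exact image_congr fun x hx => funext fun f => f.1.map_tsum (hC x fun n => hx n (mem_univ n))
  refine isCompact_sigmaTop_iff.2 (himage ▸ ?_)
  let _ : TopologicalSpace X := sigmaTop (Y : Set (X →L[ℝ] ℝ))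
  refine (isCompact_univ_pi hcpt).image_of_continuousOn (continuousOn_pi.2 fun f => ?_)
  exact continuousOn_tsum
    (fun n => ((continuous_sigmaTop f.2).comp (continuous_apply n)).continuousOn)
    ((hs f f.2).abs.add (hs (-f) (Y.neg_mem f.2)).abs)
    fun n x hx => abs_apply_le_abs_supportFn_add (hcpt n) f.2 (hx n (mem_univ n))

end UncondConvSeriesOfSets

theorem convex_seriesSumSet [NormedSpace ℝ X] (hC : ∀ n, Convex ℝ (C n)) :
    Convex ℝ (seriesSumSet C) := by
  rintro s ⟨x, hx, hxs⟩ t ⟨z, hz, hzt⟩ a b ha hb hab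
  exact ⟨fun n => a • x n + b • z n, fun n => hC n (hx n) (hz n) ha hb hab,
    (hxs.const_smul a).add (hzt.const_smul b)⟩

end SeriesOfSets

section Multimeasure

variable {Ω X : Type*} [MeasurableSpace Ω] [NormedAddCommGroup X] [NormedSpace ℝ X]
  {M : Set Ω → Set X} {Y : Submodule ℝ (X →L[ℝ] ℝ)}

theorem exists_mem_iUnion_hasSum (hne : ∀ A, MeasurableSet A → (M A).Nonempty)
    (hOT : HasOrliczThomas (Y : Set (X →L[ℝ] ℝ))) (hconv : ∀ A, MeasurableSet A → Convex ℝ (M A))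
    (hcpt : ∀ A, MeasurableSet A → @IsCompact X (sigmaTop (Y : Set (X →L[ℝ] ℝ))) (M A))
    (hca : ∀ f ∈ Y, CountablyAdditive fun A => supportFn f (M A)) {A : ℕ → Set Ω}
    (hA : ∀ n, MeasurableSet (A n)) (hd : Pairwise (Disjoint on A)) {x : ℕ → X}
    (hx : ∀ n, x n ∈ M (A n)) : ∃ s ∈ M (⋃ n, A n), HasSum x s := by
  have hmeas (S : Set ℕ) : MeasurableSet (⋃ n : S, A n) := .iUnion fun n => hA n
  have hsub (S : Set ℕ) :
      ∃ k ∈ M (⋃ n : S, A n), ∀ f ∈ Y, HasSum (fun n : S => f (x n)) (f k) :=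
    exists_mem_forall_hasSum_apply (fun n : S => hcpt _ (hA n)) (hne _ (hmeas S))
      (hconv _ (hmeas S)) (hcpt _ (hmeas S))
      (fun f hf => (hca f hf).hasSum_iUnion (fun n => hA n)
        (hd.comp_of_injective Subtype.val_injective))
      fun n => hx n
  choose v hvM hv using hsub
  have hmem : v univ ∈ M (⋃ n, A n) := by
    simpa only [iUnion_coe_set, mem_univ, iUnion_true] using hvM univ
  exact ⟨v univ, hmem, hOT.hasSum hv⟩

theorem statement5_general (hne : ∀ A, MeasurableSet A → (M A).Nonempty)
    (hOT : HasOrliczThomas (Y : Set (X →L[ℝ] ℝ))) (hconv : ∀ A, MeasurableSet A → Convex ℝ (M A))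
    (hcpt : ∀ A, MeasurableSet A → @IsCompact X (sigmaTop (Y : Set (X →L[ℝ] ℝ))) (M A))
    (hca : ∀ f ∈ Y, CountablyAdditive fun A => supportFn f (M A)) {A : ℕ → Set Ω}
    (hA : ∀ n, MeasurableSet (A n)) (hd : Pairwise (Disjoint on A)) :
    UncondConvSeriesOfSets (fun n => M (A n)) ∧
      M (⋃ n, A n) = seriesSumSet fun n => M (A n) := by
  have hsel {x : ℕ → X} (hx : ∀ n, x n ∈ M (A n)) : ∃ s ∈ M (⋃ n, A n), HasSum x s :=
    exists_mem_iUnion_hasSum hne hOT hconv hcpt hca hA hd hx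
  have huncond : UncondConvSeriesOfSets fun n => M (A n) := fun x hx =>
    (hsel hx).elim fun _ h => h.2.summable
  have hsupp (f : X →L[ℝ] ℝ) (hf : f ∈ Y) :
      supportFn f (M (⋃ n, A n)) = supportFn f (seriesSumSet fun n => M (A n)) :=
    (hca f hf A hA hd).unique <| huncond.hasSum_supportFn_seriesSumSet (fun n => hne _ (hA n))
      fun n => isCompact_image_of_isCompact_sigmaTop (hcpt _ (hA n)) hf
  refine ⟨huncond, Subset.antisymm (fun a ha => ?_) ?_⟩
  · refine mem_of_forall_le_supportFn (fun _ _ => hOT.eq_of_forall_apply_eq)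
      (huncond.nonempty_seriesSumSet fun n => hne _ (hA n))
      (convex_seriesSumSet fun n => hconv _ (hA n))
      (huncond.isCompact_sigmaTop_seriesSumSet (fun n => hcpt _ (hA n)) fun f hf =>
        (hca f hf A hA hd).summable) fun f hf => hsupp f hf ▸ ?_
    exact le_supportFn (isCompact_image_of_isCompact_sigmaTop (hcpt _ (.iUnion hA)) hf) ha
  · rintro s ⟨x, hx, hxs⟩
    obtain ⟨t, ht, hxt⟩ := hsel hx
    rwa [hxs.unique hxt]

end Multimeasure

/-- **Main theorem.** Let `X` be a Banach space and `M : Σ → b(X)` a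
set-valued map. If there is a linear subspace `Y ⊆ X*` with the Orlicz–Thomas property
such that every `M(A)` is convex and `σ(X,Y)`-compact and `s(x*, M)` is countably
additive for every `x* ∈ Y`, then `M` is a strong multimeasure. -/
theorem statement5 {Ω X : Type*} [MeasurableSpace Ω]
    [NormedAddCommGroup X] [NormedSpace ℝ X] [CompleteSpace X]
    (M : Set Ω → Set X)
    (hne : ∀ A : Set Ω, MeasurableSet A → (M A).Nonempty)
    (hbd : ∀ A : Set Ω, MeasurableSet A → Bornology.IsBounded (M A))
    (Y : Submodule ℝ (X →L[ℝ] ℝ))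
    (hOT : HasOrliczThomas (Y : Set (X →L[ℝ] ℝ)))
    (hconv : ∀ A : Set Ω, MeasurableSet A → Convex ℝ (M A))
    (hcpt : ∀ A : Set Ω, MeasurableSet A → @IsCompact X (sigmaTop (Y : Set (X →L[ℝ] ℝ))) (M A))
    (hca : ∀ f ∈ Y, CountablyAdditive (fun A => supportFn f (M A))) :
    IsStrongMultimeasure M := fun _ hA hd =>
  (statement5_general hne hOT hconv hcpt hca hA hd).imp_right (congrArg closure)
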